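/- arXiv:1707.07739 — 2 statements merged into one kernel-verified Lean document; each statement's English description precedes it below -/
import Mathlib

section
/- (Output bound / deconvolution, independent case.) Let θ > 0. Let A be a flow and U a service process on a common probability space, stochastically independent, with A MGF-bounded for θ with bounding functions (ρ_A, σ_A) and U MGF-bounded for θ with bounding functions (ρ_U, σ_U). Let B be the output of a dynamic U-server with input A. If ρ_A(θ) + ρ_U(θ) < 0, then for all s ≤ t: E[e^{θ B(s,t)}] ≤ e^{θρ_A(θ)(t−s) + θ(σ_A(θ)+σ_U(θ))} / (1 − e^{θ(ρ_A(θ)+ρ_U(θ))}); in particular B is MGF-bounded for θ with bounding functions ρ_B(θ) = ρ_A(θ) and σ_B(θ) = σ_A(θ) + σ_U(θ) − (1/θ)·log(1 − e^{θ(ρ_A(θ)+ρ_U(θ))}). -/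
open MeasureTheory ProbabilityTheory

/-!
The minimum in the server inequality at time `s` is attained at some `r ≤ s`, so together with
`B t ≤ A t` every outcome satisfies `B t - B s ≤ (A t - A r) - U r s`. Hence `exp (θ (B t - B s))`
is at most the sum over `r ≤ s` of `exp (θ (A t - A r)) * exp (-θ U r s)`. By independence the
expectation of each product factors, and the two MGF bounds make it at most
`exp (θ ρA (t - s) + θ (σA + σU)) * q ^ (s - r)` with `q = exp (θ (ρA + ρU)) < 1`; it remains to sum
a geometric series.
-/

open scoped ENNReal

section Pathwise

/-- The min-plus convolution `min_{0 ≤ s ≤ t} (a s + u s t)` of an arrival path `a` with a service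
path `u`, by which a dynamic server bounds its output from below. The infimum is over a finite
nonempty set, so `sInf` is a genuine minimum. -/
noncomputable def minPlusConv (a : ℕ → ℝ) (u : ℕ → ℕ → ℝ) (t : ℕ) : ℝ :=
  sInf ((fun s => a s + u s t) '' Set.Icc 0 t)

/-- The path `b` is an output of a dynamic `u`-server with input path `a`. The notion is pathwise:
for processes it is required of every, or almost every, outcome. -/
structure IsDynamicServerOutput (u : ℕ → ℕ → ℝ) (a b : ℕ → ℝ) : Prop where
  minPlusConv_le : ∀ t, minPlusConv a u t ≤ b t
  le_input : ∀ t, b t ≤ a t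

variable {a b : ℕ → ℝ} {u : ℕ → ℕ → ℝ}

lemma exists_minPlusConv_eq (a : ℕ → ℝ) (u : ℕ → ℕ → ℝ) (t : ℕ) :
    ∃ r ≤ t, minPlusConv a u t = a r + u r t := by
  have hne : ((fun s => a s + u s t) '' Set.Icc 0 t).Nonempty :=
    (Set.nonempty_Icc.2 t.zero_le).image _
  obtain ⟨r, hr, hmin⟩ := hne.csInf_mem ((Set.finite_Icc 0 t).image _)
  exact ⟨r, hr.2, hmin.symm⟩

lemma IsDynamicServerOutput.exists_increment_le (h : IsDynamicServerOutput u a b) (s t : ℕ) :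
    ∃ r ≤ s, b t - b s ≤ (a t - a r) - u r s := by
  obtain ⟨r, hrs, hmin⟩ := exists_minPlusConv_eq a u s
  exact ⟨r, hrs, by linarith [h.minPlusConv_le s, h.le_input t]⟩

end Pathwise

lemma sum_range_succ_pow_sub_le {q : ℝ} (hq0 : 0 ≤ q) (hq1 : q < 1) (n : ℕ) :
    ∑ k ∈ Finset.range (n + 1), q ^ (n - k) ≤ (1 - q)⁻¹ := by
  rw [Finset.sum_flip (fun k => q ^ k), ← tsum_geometric_of_lt_one hq0 hq1]
  exact (summable_geometric_of_lt_one hq0 hq1).sum_le_tsum _ fun k _ => pow_nonneg hq0 k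

section ExponentialMoments

variable {Ω : Type*} {mΩ : MeasurableSpace Ω} {μ : Measure Ω} {θ : ℝ}

/-- The moment generating function `E[exp (θ X)]` with values in `[0, ∞]`. Unlike
`ProbabilityTheory.mgf`, it is `∞` rather than `0` when `exp (θ X)` is not integrable, so that an
upper bound on it carries integrability. -/
noncomputable def emgf (X : Ω → ℝ) (μ : Measure Ω) (θ : ℝ) : ℝ≥0∞ :=
  ∫⁻ ω, ENNReal.ofReal (Real.exp (θ * X ω)) ∂μ

lemma emgf_add_of_indepFun {X Y : Ω → ℝ} (hX : AEMeasurable X μ) (hY : AEMeasurable Y μ)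
    (hXY : IndepFun X Y μ) (θ : ℝ) : emgf (X + Y) μ θ = emgf X μ θ * emgf Y μ θ := by
  have hexp : Measurable fun x : ℝ => ENNReal.ofReal (Real.exp (θ * x)) := by fun_prop
  simp only [emgf, Pi.add_apply, mul_add, Real.exp_add, ENNReal.ofReal_mul (Real.exp_nonneg _)]
  exact lintegral_mul_eq_lintegral_mul_lintegral_of_indepFun'' (hexp.comp_aemeasurable hX)
    (hexp.comp_aemeasurable hY) (hXY.comp hexp hexp)

/-- A form of the union bound for exponential moments: `Z` lies below the maximum of the `W i`, and
the exponential of a maximum is at most the sum of the exponentials. -/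
lemma emgf_le_sum_of_exists_le {ι : Type*} {S : Finset ι} {Z : Ω → ℝ} {W : ι → Ω → ℝ} (hθ : 0 ≤ θ)
    (hW : ∀ i ∈ S, AEMeasurable (W i) μ) (hZ : ∀ᵐ ω ∂μ, ∃ i ∈ S, Z ω ≤ W i ω) :
    emgf Z μ θ ≤ ∑ i ∈ S, emgf (W i) μ θ := by
  simp only [emgf]
  rw [← lintegral_finsetSum' S fun i hi => by have := hW i hi; fun_prop]
  refine lintegral_mono_ae (hZ.mono fun ω ⟨i, hi, hle⟩ => ?_)
  calc ENNReal.ofReal (Real.exp (θ * Z ω))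
      ≤ ENNReal.ofReal (Real.exp (θ * W i ω)) := by gcongr
    _ ≤ ∑ i ∈ S, ENNReal.ofReal (Real.exp (θ * W i ω)) :=
      Finset.single_le_sum (f := fun i => ENNReal.ofReal (Real.exp (θ * W i ω)))
        (fun _ _ => zero_le) hi

/-- The bivariate process `X` is MGF-bounded for `θ` with bounding values `ρ` and `σ`. A flow `A` is
MGF-bounded when its increments `A t - A s` are, and a service process `U` when `-U` is. -/
def IsMGFBounded (μ : Measure Ω) (θ ρ σ : ℝ) (X : ℕ → ℕ → Ω → ℝ) : Prop :=
  ∀ s t, s ≤ t →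
    emgf (X s t) μ θ ≤ ENNReal.ofReal (Real.exp (θ * ρ * ((t : ℝ) - (s : ℝ)) + θ * σ))

lemma IsMGFBounded.emgf_add_le {X Y : ℕ → ℕ → Ω → ℝ} {ρX σX ρY σY : ℝ} {r s t : ℕ}
    (hX : IsMGFBounded μ θ ρX σX X) (hY : IsMGFBounded μ θ ρY σY Y)
    (hXm : AEMeasurable (X r t) μ) (hYm : AEMeasurable (Y r s) μ)
    (hXY : IndepFun (X r t) (Y r s) μ) (hrs : r ≤ s) (hst : s ≤ t) :
    emgf (X r t + Y r s) μ θ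
      ≤ ENNReal.ofReal (Real.exp (θ * ρX * ((t : ℝ) - (s : ℝ)) + θ * (σX + σY))
          * Real.exp (θ * (ρX + ρY)) ^ (s - r)) := by
  have hexponents : (θ * ρX * ((t : ℝ) - r) + θ * σX) + (θ * ρY * ((s : ℝ) - r) + θ * σY)
      = (θ * ρX * ((t : ℝ) - s) + θ * (σX + σY)) + ↑(s - r) * (θ * (ρX + ρY)) := by
    rw [Nat.cast_sub hrs]
    ring
  rw [emgf_add_of_indepFun hXm hYm hXY, ← Real.exp_nat_mul, ← Real.exp_add, ← hexponents,
    Real.exp_add, ENNReal.ofReal_mul (Real.exp_nonneg _)]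
  exact mul_le_mul' (hX r t (hrs.trans hst)) (hY r s hrs)

end ExponentialMoments

lemma indepFun_sub_of_indep_iSup_comap {Ω ι κ β γ : Type*} {mΩ : MeasurableSpace Ω}
    {μ : Measure Ω} [MeasurableSpace β] [Sub β] [MeasurableSub₂ β] [MeasurableSpace γ]
    {X : ι → Ω → β} {Y : κ → Ω → γ}
    (h : Indep (⨆ i, MeasurableSpace.comap (X i) inferInstance)
      (⨆ k, MeasurableSpace.comap (Y k) inferInstance) μ) (i j : ι) (k : κ) :
    IndepFun (X i - X j) (Y k) μ := by
  have hX : ∀ i, Measurable[⨆ i, MeasurableSpace.comap (X i) inferInstance] (X i) := fun i =>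
    measurable_iff_comap_le.2 (le_iSup (fun i => MeasurableSpace.comap (X i) inferInstance) i)
  exact (IndepFun_iff_Indep _ _ _).2 <| indep_of_indep_of_le h ((hX i).sub (hX j)).comap_le
    (le_iSup (fun k => MeasurableSpace.comap (Y k) inferInstance) k)

theorem output_bound_independent_general {Ω : Type*} {mΩ : MeasurableSpace Ω} {μ : Measure Ω}
    {θ : ℝ} (hθ : 0 < θ) {A B : ℕ → Ω → ℝ} {U : ℕ → ℕ → Ω → ℝ} {ρA σA ρU σU : ℝ}
    (hAmeas : ∀ t, AEMeasurable (A t) μ) (hUmeas : ∀ s t, AEMeasurable (U s t) μ)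
    (hA : IsMGFBounded μ θ ρA σA fun s t => A t - A s) (hU : IsMGFBounded μ θ ρU σU (-U))
    (hindep : ∀ r s t, r ≤ s → s ≤ t → IndepFun (A t - A r) (U r s) μ)
    (hserver : ∀ᵐ ω ∂μ, IsDynamicServerOutput (U · · ω) (A · ω) (B · ω))
    (hstab : ρA + ρU < 0) {s t : ℕ} (hst : s ≤ t) :
    emgf (B t - B s) μ θ
      ≤ ENNReal.ofReal (Real.exp (θ * ρA * ((t : ℝ) - (s : ℝ)) + θ * (σA + σU))
          / (1 - Real.exp (θ * (ρA + ρU)))) := by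
  set C := Real.exp (θ * ρA * ((t : ℝ) - (s : ℝ)) + θ * (σA + σU))
  set q := Real.exp (θ * (ρA + ρU))
  have hC : 0 ≤ C := Real.exp_nonneg _
  have hq0 : 0 ≤ q := Real.exp_nonneg _
  have hq1 : q < 1 := Real.exp_lt_one_iff.2 (mul_neg_of_pos_of_neg hθ hstab)
  have hincrement : ∀ᵐ ω ∂μ, ∃ r ∈ Finset.range (s + 1),
      (B t - B s) ω ≤ ((A t - A r) + (-U) r s) ω := hserver.mono fun ω hω => by
    obtain ⟨r, hrs, hle⟩ := hω.exists_increment_le s t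
    exact ⟨r, Finset.mem_range_succ_iff.2 hrs, hle⟩
  have hterm : ∀ r ∈ Finset.range (s + 1),
      emgf ((A t - A r) + (-U) r s) μ θ ≤ ENNReal.ofReal (C * q ^ (s - r)) := fun r hr =>
    have hrs : r ≤ s := Finset.mem_range_succ_iff.1 hr
    hA.emgf_add_le hU ((hAmeas t).sub (hAmeas r)) (hUmeas r s).neg
      ((hindep r s t hrs hst).comp measurable_id measurable_neg) hrs hst
  calc emgf (B t - B s) μ θ
      ≤ ∑ r ∈ Finset.range (s + 1), emgf ((A t - A r) + (-U) r s) μ θ :=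
        emgf_le_sum_of_exists_le hθ.le
          (fun r _ => ((hAmeas t).sub (hAmeas r)).add (hUmeas r s).neg) hincrement
    _ ≤ ∑ r ∈ Finset.range (s + 1), ENNReal.ofReal (C * q ^ (s - r)) := Finset.sum_le_sum hterm
    _ = ENNReal.ofReal (C * ∑ r ∈ Finset.range (s + 1), q ^ (s - r)) := by
        rw [Finset.mul_sum,
          ENNReal.ofReal_sum_of_nonneg fun r _ => mul_nonneg hC (pow_nonneg hq0 _)]
    _ ≤ ENNReal.ofReal (C / (1 - q)) := by
        rw [div_eq_mul_inv]
        exact ENNReal.ofReal_le_ofReal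
          (mul_le_mul_of_nonneg_left (sum_range_succ_pow_sub_le hq0 hq1 s) hC)

/-- Output bound (deconvolution), independent case. -/
theorem output_bound_independent
    {Ω : Type*} [MeasurableSpace Ω] (P : Measure Ω) [IsProbabilityMeasure P]
    (θ : ℝ) (hθ : 0 < θ)
    (A B : ℕ → Ω → ℝ) (U : ℕ → ℕ → Ω → ℝ)
    (ρA σA ρU σU : ℝ)
    -- A is a flow
    (hAmeas : ∀ t, Measurable (A t))
    (hAmono : ∀ ω, Monotone fun t => A t ω)
    (hAzero : ∀ ω, A 0 ω = 0)
    -- U is a service process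
    (hUmeas : ∀ s t, Measurable (U s t))
    (hUnonneg : ∀ s t, s ≤ t → ∀ ω, 0 ≤ U s t ω)
    -- MGF bounds
    (hAbound : ∀ s t, s ≤ t →
      ∫⁻ ω, ENNReal.ofReal (Real.exp (θ * (A t ω - A s ω))) ∂P
        ≤ ENNReal.ofReal (Real.exp (θ * ρA * ((t : ℝ) - (s : ℝ)) + θ * σA)))
    (hUbound : ∀ s t, s ≤ t →
      ∫⁻ ω, ENNReal.ofReal (Real.exp (-θ * U s t ω)) ∂P
        ≤ ENNReal.ofReal (Real.exp (θ * ρU * ((t : ℝ) - (s : ℝ)) + θ * σU)))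
    -- stochastic independence of A and U
    (hIndep : Indep (⨆ t, MeasurableSpace.comap (A t) inferInstance)
      (⨆ p : ℕ × ℕ, MeasurableSpace.comap (U p.1 p.2) inferInstance) P)
    -- B is the output of a dynamic U-server with input A (and is a flow)
    (hBmeas : ∀ t, Measurable (B t))
    (hBmono : ∀ ω, Monotone fun t => B t ω)
    (hBzero : ∀ ω, B 0 ω = 0)
    (hServer : ∀ t ω, sInf ((fun s => A s ω + U s t ω) '' Set.Icc 0 t) ≤ B t ω)
    (hBleA : ∀ t ω, B t ω ≤ A t ω)
    -- stability condition
    (hstab : ρA + ρU < 0) :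
    ∀ s t, s ≤ t →
      ∫⁻ ω, ENNReal.ofReal (Real.exp (θ * (B t ω - B s ω))) ∂P
        ≤ ENNReal.ofReal (Real.exp (θ * ρA * ((t : ℝ) - (s : ℝ)) + θ * (σA + σU))
            / (1 - Real.exp (θ * (ρA + ρU)))) :=
  fun s t => output_bound_independent_general hθ (fun t => (hAmeas t).aemeasurable)
    (fun s t => (hUmeas s t).aemeasurable) hAbound (by simpa [IsMGFBounded, emgf] using hUbound)
    (fun r s t _ _ => indepFun_sub_of_indep_iSup_comap hIndep t r (r, s))
    (.of_forall fun ω => ⟨(hServer · ω), (hBleA · ω)⟩) hstab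
end

section
/- (End-to-end delay bound for N servers.) Let θ > 0 and N ≥ 1. Let A be a flow and U₁, …, U_N service processes on a common probability space, with A, U₁, …, U_N mutually stochastically independent, A MGF-bounded for θ with bounding functions (ρ_A, σ_A) and each Uᵢ MGF-bounded for θ with bounding functions (ρᵢ, σᵢ). Let B₀ := A and for i = 1, …, N let Bᵢ be the output of a dynamic Uᵢ-server with input B_{i−1}; define the end-to-end virtual delay d(t) := min{ s ≥ 0 : A(t) ≤ B_N(t + s) }. Under the stability condition ρ_A(θ) < min_{1≤i≤N} (−ρᵢ(θ)), for all t ≥ 0 and integer T ≥ 0: P(d(t) > T) ≤ e^{−θρ_A(θ)T} · e^{θσ_A(θ) + Σ_{i=1}^{N} θσᵢ(θ)} / ∏_{i=1}^{N} (1 − e^{θ(ρᵢ(θ)+ρ_A(θ))}). -/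
open MeasureTheory ProbabilityTheory

/-!
If the delay at `t` exceeds `T`, then `B_N(t + T) < A(t)`. Unfolding the servers from the last one
back to the first produces times `s₀ ≤ s₁ ≤ ⋯ ≤ s_N = t + T` with
`A(s₀) + ∑ Uᵢ(sᵢ₋₁, sᵢ) ≤ B_N(t + T) < A(t)`, and since `A` is nondecreasing and `Uᵢ ≥ 0`, this
forces `s₀ ≤ t`.

For a fixed chain of times, Chernoff's inequality, independence and the MGF bounds estimate the
probability of this event. Writing `t - s₀ = ∑ (sᵢ - sᵢ₋₁) - T` distributes the growth rate of the
arrivals over the increments of the chain, and the estimate becomes a constant times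
`∏ exp (θ (ρᵢ + ρ_A)) ^ (sᵢ - sᵢ₋₁)`. A chain is determined by its last time and its increments, so
the union bound over all chains is at most a product of geometric series.
-/

open scoped ENNReal

section Chains

variable {ι M : Type*} {N : ℕ}

/-- The departures `B` of a server with arrivals `A` and service process `U` satisfy the min-plus
lower bound `B t ≥ min_{s ≤ t} (A s + U s t)`, stated through a time `s` attaining the minimum. It
is only the lower half of the notion of a dynamic server: `B ≤ A` is not part of it. -/
def HasDynamicService [Preorder ι] [Add M] [LE M] (U : ι → ι → M) (A B : ι → M) : Prop :=
  ∀ t, ∃ s ≤ t, A s + U s t ≤ B t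

lemma hasDynamicService_of_sInf_le [Preorder ι] [LocallyFiniteOrderBot ι]
    [ConditionallyCompleteLinearOrder M] [Add M] {U : ι → ι → M} {A B : ι → M}
    (h : ∀ t, sInf ((fun s => A s + U s t) '' Set.Iic t) ≤ B t) : HasDynamicService U A B := by
  intro t
  obtain ⟨s, hs, hmin⟩ := (Set.nonempty_Iic.image fun s => A s + U s t).csInf_mem
    ((Set.finite_Iic t).image _)
  exact ⟨s, hs, hmin.trans_le (h t)⟩

lemma monotone_snoc [Preorder ι] {s : Fin (N + 1) → ι} (hs : Monotone s) {τ : ι}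
    (hτ : s (Fin.last N) ≤ τ) : Monotone (Fin.snoc s τ : Fin (N + 2) → ι) := by
  refine Fin.monotone_iff_le_succ.mpr fun i => ?_
  cases i using Fin.lastCases with
  | last => simpa only [Fin.succ_last, Fin.snoc_last, Fin.snoc_castSucc] using hτ
  | cast i =>
    simpa only [Fin.succ_castSucc, Fin.snoc_castSucc] using hs i.castSucc_lt_succ.le

lemma exists_chain_of_hasDynamicService [Preorder ι] [AddCommMonoid M] [PartialOrder M]
    [IsOrderedAddMonoid M] {U : Fin N → ι → ι → M} {B : Fin (N + 1) → ι → M}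
    (hB : ∀ i, HasDynamicService (U i) (B i.castSucc) (B i.succ)) (τ : ι) :
    ∃ s : Fin (N + 1) → ι, Monotone s ∧ s (Fin.last N) = τ ∧
      B 0 (s 0) + ∑ i, U i (s i.castSucc) (s i.succ) ≤ B (Fin.last N) τ := by
  induction N generalizing τ with
  | zero => exact ⟨fun _ => τ, monotone_const, rfl, by simp⟩
  | succ N ih =>
    obtain ⟨r, hrτ, hr⟩ := hB (Fin.last N) τ
    obtain ⟨s, hs, rfl, hsum⟩ := ih (B := fun k => B k.castSucc) (fun i => hB i.castSucc) r
    refine ⟨Fin.snoc s τ, monotone_snoc hs hrτ, Fin.snoc_last .., ?_⟩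
    simp only [Fin.sum_univ_castSucc, Fin.succ_castSucc, Fin.succ_last, Fin.snoc_castSucc,
      Fin.snoc_last, ← add_assoc]
    exact (add_le_add_left hsum _).trans hr

/-- The chains of times `s 0 ≤ s 1 ≤ ⋯ ≤ s N = τ` with `s 0 ≤ t`, along which the server
inequalities are unfolded: server `i` accounts for the interval from `s i` to `s (i + 1)`. -/
def timeChains [Preorder ι] (N : ℕ) (t τ : ι) : Set (Fin (N + 1) → ι) :=
  {s | Monotone s ∧ s 0 ≤ t ∧ s (Fin.last N) = τ}

lemma exists_mem_timeChains_of_lt [LinearOrder ι] [AddCommMonoid M] [PartialOrder M]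
    [IsOrderedAddMonoid M] {U : Fin N → ι → ι → M} {B : Fin (N + 1) → ι → M}
    (hU : ∀ i s t, s ≤ t → 0 ≤ U i s t) (hB₀ : Monotone (B 0))
    (hB : ∀ i, HasDynamicService (U i) (B i.castSucc) (B i.succ)) {t τ : ι}
    (hlt : B (Fin.last N) τ < B 0 t) :
    ∃ s ∈ timeChains N t τ, B 0 (s 0) + ∑ i, U i (s i.castSucc) (s i.succ) < B 0 t := by
  obtain ⟨s, hs, hsτ, hsum⟩ := exists_chain_of_hasDynamicService hB τ
  have hsum_lt := hsum.trans_lt hlt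
  have hU_sum : 0 ≤ ∑ i, U i (s i.castSucc) (s i.succ) :=
    Finset.sum_nonneg fun i _ => hU i _ _ (hs i.castSucc_lt_succ.le)
  have hs₀ : s 0 ≤ t := by
    by_contra! h
    exact ((le_add_of_nonneg_right hU_sum).trans_lt hsum_lt).not_ge (hB₀ h.le)
  exact ⟨s, ⟨hs, hs₀, hsτ⟩, hsum_lt⟩

/-- The increments `s (i + 1) - s i` of a sequence of times. The subtraction is truncated, which is
harmless for the monotone sequences it is applied to. -/
def increments (s : Fin (N + 1) → ℕ) (i : Fin N) : ℕ := s i.succ - s i.castSucc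

lemma castSucc_add_increments {s : Fin (N + 1) → ℕ} (hs : Monotone s) (i : Fin N) :
    s i.castSucc + increments s i = s i.succ :=
  Nat.add_sub_cancel' (hs i.castSucc_lt_succ.le)

lemma head_add_sum_increments {s : Fin (N + 1) → ℕ} (hs : Monotone s) :
    s 0 + ∑ i, increments s i = s (Fin.last N) := by
  induction N with
  | zero => simp
  | succ N ih =>
    have hinit := ih (s := fun k => s k.castSucc) (hs.comp Fin.strictMono_castSucc.monotone)
    rw [Fin.sum_univ_castSucc, ← add_assoc]
    exact (congrArg (· + _) hinit).trans (castSucc_add_increments hs (Fin.last N))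

lemma injOn_increments_timeChains (t τ : ℕ) : Set.InjOn increments (timeChains N t τ) := by
  rintro s ⟨hs, -, hsτ⟩ s' ⟨hs', -, hsτ'⟩ heq
  funext k
  induction k using Fin.reverseInduction with
  | last => rw [hsτ, hsτ']
  | cast i ih =>
    refine Nat.add_right_cancel (m := increments s i) ?_
    rw [castSucc_add_increments hs, heq, castSucc_add_increments hs', ih]

end Chains

section GeometricSeries

lemma tsum_prod_eq_prod_tsum {N : ℕ} {α : Fin N → Type*} (f : ∀ i, α i → ℝ≥0∞) :
    ∑' u : ∀ i, α i, ∏ i, f i (u i) = ∏ i, ∑' a, f i a := by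
  induction N with
  | zero => simp
  | succ N ih =>
    rw [← (Fin.consEquiv α).tsum_eq, ENNReal.tsum_prod', Fin.prod_univ_succ, ← ih fun i => f i.succ]
    simp only [Fin.consEquiv_apply, Fin.prod_univ_succ, Fin.cons_zero, Fin.cons_succ,
      ENNReal.tsum_mul_left, ENNReal.tsum_mul_right]

lemma tsum_timeChains_le {N : ℕ} (q : Fin N → ℝ≥0∞) (t τ : ℕ) :
    ∑' s : timeChains N t τ, ∏ i, q i ^ increments s.1 i ≤ ∏ i, (1 - q i)⁻¹ :=
  calc ∑' s : timeChains N t τ, ∏ i, q i ^ increments s.1 i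
      ≤ ∑' u : Fin N → ℕ, ∏ i, q i ^ u i :=
        ENNReal.tsum_comp_le_tsum_of_injective (injOn_increments_timeChains t τ).injective
          fun u => ∏ i, q i ^ u i
    _ = ∏ i, (1 - q i)⁻¹ := by
        simp only [tsum_prod_eq_prod_tsum fun i n => q i ^ n, ENNReal.tsum_geometric]

lemma ofReal_mul_prod_inv_one_sub {κ : Type*} [Fintype κ] (C : ℝ) {q : κ → ℝ} (hq₀ : ∀ i, 0 ≤ q i)
    (hq₁ : ∀ i, q i < 1) :
    ENNReal.ofReal C * ∏ i, (1 - ENNReal.ofReal (q i))⁻¹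
      = ENNReal.ofReal (C / ∏ i, (1 - q i)) := by
  have hpos : ∀ i, 0 < 1 - q i := fun i => sub_pos.mpr (hq₁ i)
  have hinv : ∀ i, (1 - ENNReal.ofReal (q i))⁻¹ = ENNReal.ofReal (1 - q i)⁻¹ := fun i => by
    rw [ENNReal.ofReal_inv_of_pos (hpos i), ENNReal.ofReal_sub 1 (hq₀ i), ENNReal.ofReal_one]
  have hinv_nonneg : ∀ i, 0 ≤ (1 - q i)⁻¹ := fun i => inv_nonneg.mpr (hpos i).le
  simp only [hinv]
  rw [← ENNReal.ofReal_prod_of_nonneg fun i _ => hinv_nonneg i,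
    ← ENNReal.ofReal_mul' (Finset.prod_nonneg fun i _ => hinv_nonneg i), Finset.prod_inv_distrib,
    div_eq_mul_inv]

end GeometricSeries

section Chernoff

variable {Ω : Type*} {N : ℕ} {X : ℕ → ℕ → Ω → ℝ} {Y : Fin N → ℕ → ℕ → Ω → ℝ}

/-- The values that the arrivals `X` on `[s 0, t]` and the services `Y i` on `[s i, s (i + 1)]`
contribute to the Chernoff bound for a sequence of times `s`; the index `none` stands for the
arrivals. -/
def chainTerms (X : ℕ → ℕ → Ω → ℝ) (Y : Fin N → ℕ → ℕ → Ω → ℝ) (t : ℕ) (s : Fin (N + 1) → ℕ)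
    (j : Option (Fin N)) : Ω → ℝ :=
  j.elim (X (s 0) t) fun i => Y i (s i.castSucc) (s i.succ)

lemma measurable_chainTerms {m : Option (Fin N) → MeasurableSpace Ω}
    (hX : ∀ s t, Measurable[m none] (X s t)) (hY : ∀ i s t, Measurable[m (some i)] (Y i s t))
    (t : ℕ) (s : Fin (N + 1) → ℕ) : ∀ j, Measurable[m j] (chainTerms X Y t s j)
  | none => hX _ _
  | some i => hY i _ _

variable [MeasurableSpace Ω] {P : Measure Ω}

lemma iIndepFun_of_iIndep_of_measurable {κ : Type*} {β : κ → Type*} [∀ j, MeasurableSpace (β j)]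
    {m : κ → MeasurableSpace Ω} {f : ∀ j, Ω → β j} (hm : iIndep m P)
    (hf : ∀ j, Measurable[m j] (f j)) : iIndepFun f P :=
  (iIndepFun_iff_iIndep ..).mpr (iIndep_of_iIndep_of_le hm fun j => (hf j).comap_le)

lemma measure_le_sum_le_prod_lintegral_exp {κ : Type*} [Fintype κ] {X : κ → Ω → ℝ}
    (hX : ∀ j, Measurable (X j)) (hindep : iIndepFun X P) (ε : ℝ) :
    P {ω | ε ≤ ∑ j, X j ω}
      ≤ (∏ j, ∫⁻ ω, ENNReal.ofReal (Real.exp (X j ω)) ∂P) / ENNReal.ofReal (Real.exp ε) := by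
  let Y : κ → Ω → ℝ≥0∞ := fun j ω => ENNReal.ofReal (Real.exp (X j ω))
  have hY : ∀ j, Measurable (Y j) := fun j => (hX j).exp.ennreal_ofReal
  have hY_indep : iIndepFun Y P :=
    hindep.comp (fun _ x => ENNReal.ofReal (Real.exp x)) fun _ =>
      Real.measurable_exp.ennreal_ofReal
  have hY_prod : ∀ ω, ∏ j, Y j ω = ENNReal.ofReal (Real.exp (∑ j, X j ω)) := fun ω => by
    rw [Real.exp_sum, ENNReal.ofReal_prod_of_nonneg fun j _ => (Real.exp_pos _).le]
  calc P {ω | ε ≤ ∑ j, X j ω}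
      ≤ P {ω | ENNReal.ofReal (Real.exp ε) ≤ ∏ j, Y j ω} := by
        refine measure_mono fun ω (hω : ε ≤ ∑ j, X j ω) => ?_
        rw [Set.mem_ofPred_eq, hY_prod]
        exact ENNReal.ofReal_le_ofReal (Real.exp_le_exp.mpr hω)
    _ ≤ (∫⁻ ω, ∏ j, Y j ω ∂P) / ENNReal.ofReal (Real.exp ε) :=
        meas_ge_le_lintegral_div (Finset.measurable_fun_prod _ fun j _ => hY j).aemeasurable
          (ENNReal.ofReal_pos.mpr (Real.exp_pos ε)).ne' ENNReal.ofReal_ne_top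
    _ = _ := by rw [lintegral_prod_eq_prod_lintegral_of_indepFun _ Y hY_indep hY]

/-- The bivariate process `X` has exponential moments `E[exp (X s t)] ≤ exp (a (t - s) + b)`. A
flow `A`, respectively a service process `U`, is MGF-bounded for `θ` with bounding functions
`(ρ, σ)` when `θ (A t - A s)`, respectively `-θ (U s t)`, has this property for `a = θ ρ(θ)` and
`b = θ σ(θ)`. -/
def MGFBounded (P : Measure Ω) (X : ℕ → ℕ → Ω → ℝ) (a b : ℝ) : Prop :=
  ∀ s t, s ≤ t → ∫⁻ ω, ENNReal.ofReal (Real.exp (X s t ω)) ∂P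
    ≤ ENNReal.ofReal (Real.exp (a * ((t : ℝ) - (s : ℝ)) + b))

variable {a b : ℝ} {c d : Fin N → ℝ}

lemma prod_lintegral_exp_chainTerms_le (hX : MGFBounded P X a b)
    (hY : ∀ i, MGFBounded P (Y i) (c i) (d i)) {t T : ℕ} {s : Fin (N + 1) → ℕ}
    (hs : s ∈ timeChains N t (t + T)) :
    ∏ j, ∫⁻ ω, ENNReal.ofReal (Real.exp (chainTerms X Y t s j ω)) ∂P
      ≤ ENNReal.ofReal (Real.exp (-a * T) * Real.exp (b + ∑ i, d i))
        * ∏ i, ENNReal.ofReal (Real.exp (c i + a)) ^ increments s i := by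
  obtain ⟨hmono, hs₀, hsτ⟩ := hs
  have hinc (i : Fin N) : (s i.succ : ℝ) - s i.castSucc = increments s i := by
    rw [← castSucc_add_increments hmono i]; push_cast; ring
  have hsum : (t : ℝ) - s 0 = ∑ i, (increments s i : ℝ) - T := by
    have h := (head_add_sum_increments hmono).trans hsτ
    rify at h
    linarith
  have hexponent : a * ((t : ℝ) - s 0) + b
        + ∑ i, (c i * ((s i.succ : ℝ) - s i.castSucc) + d i)
      = -a * T + (b + ∑ i, d i) + ∑ i, (increments s i : ℝ) * (c i + a) := by
    simp only [hsum, hinc, mul_add, Finset.sum_add_distrib, ← Finset.sum_mul, mul_comm (c _)]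
    ring
  calc ∏ j, ∫⁻ ω, ENNReal.ofReal (Real.exp (chainTerms X Y t s j ω)) ∂P
      ≤ ENNReal.ofReal (Real.exp (a * ((t : ℝ) - s 0) + b))
        * ∏ i, ENNReal.ofReal (Real.exp (c i * ((s i.succ : ℝ) - s i.castSucc) + d i)) := by
        rw [Fintype.prod_option]
        exact mul_le_mul' (hX _ _ hs₀)
          (Finset.prod_le_prod' fun i _ => hY i _ _ (hmono i.castSucc_lt_succ.le))
    _ = ENNReal.ofReal (Real.exp (-a * T + (b + ∑ i, d i)
          + ∑ i, (increments s i : ℝ) * (c i + a))) := by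
        rw [← ENNReal.ofReal_prod_of_nonneg fun i _ => (Real.exp_pos _).le,
          ← ENNReal.ofReal_mul (Real.exp_pos _).le, ← Real.exp_sum, ← Real.exp_add, hexponent]
    _ = _ := by
        simp only [← ENNReal.ofReal_pow (Real.exp_pos _).le, ← Real.exp_nat_mul]
        rw [← ENNReal.ofReal_prod_of_nonneg fun i _ => (Real.exp_pos _).le, ← Real.exp_sum,
          ← Real.exp_add, ← ENNReal.ofReal_mul (Real.exp_pos _).le, ← Real.exp_add]

lemma measure_biUnion_timeChains_le (hXmeas : ∀ s t, Measurable (X s t))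
    (hYmeas : ∀ i s t, Measurable (Y i s t)) (hX : MGFBounded P X a b)
    (hY : ∀ i, MGFBounded P (Y i) (c i) (d i)) {t T : ℕ}
    (hindep : ∀ s ∈ timeChains N t (t + T), iIndepFun (chainTerms X Y t s) P) :
    P (⋃ s ∈ timeChains N t (t + T), {ω | 0 ≤ ∑ j, chainTerms X Y t s j ω})
      ≤ ENNReal.ofReal (Real.exp (-a * T) * Real.exp (b + ∑ i, d i))
        * ∏ i, (1 - ENNReal.ofReal (Real.exp (c i + a)))⁻¹ := by
  have hchain (s : timeChains N t (t + T)) : P {ω | 0 ≤ ∑ j, chainTerms X Y t s.1 j ω}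
      ≤ ENNReal.ofReal (Real.exp (-a * T) * Real.exp (b + ∑ i, d i))
        * ∏ i, ENNReal.ofReal (Real.exp (c i + a)) ^ increments s.1 i := by
    have hchernoff := measure_le_sum_le_prod_lintegral_exp
      (measurable_chainTerms hXmeas hYmeas t s.1) (hindep s.1 s.2) 0
    rw [Real.exp_zero, ENNReal.ofReal_one, div_one] at hchernoff
    exact hchernoff.trans (prod_lintegral_exp_chainTerms_le hX hY s.2)
  calc P (⋃ s ∈ timeChains N t (t + T), {ω | 0 ≤ ∑ j, chainTerms X Y t s j ω})
      ≤ ∑' s : timeChains N t (t + T), P {ω | 0 ≤ ∑ j, chainTerms X Y t s.1 j ω} :=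
        measure_biUnion_le P (Set.to_countable _) _
    _ ≤ ∑' s : timeChains N t (t + T),
          ENNReal.ofReal (Real.exp (-a * T) * Real.exp (b + ∑ i, d i))
            * ∏ i, ENNReal.ofReal (Real.exp (c i + a)) ^ increments s.1 i :=
        ENNReal.tsum_le_tsum hchain
    _ ≤ _ := by
        rw [ENNReal.tsum_mul_left]
        gcongr
        exact tsum_timeChains_le _ _ _

end Chernoff

section Delay

variable {Ω : Type*} {θ : ℝ} {N : ℕ} {A : ℕ → Ω → ℝ} {U : Fin N → ℕ → ℕ → Ω → ℝ}
  {B : ℕ → ℕ → Ω → ℝ}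

lemma setOf_lt_delay_subset (hθ : 0 ≤ θ) (hAmono : ∀ ω, Monotone fun t => A t ω)
    (hUnonneg : ∀ i s t, s ≤ t → ∀ ω, 0 ≤ U i s t ω) (hB0 : ∀ t ω, B 0 t ω = A t ω)
    (hServer : ∀ i : Fin N, ∀ t ω,
      sInf ((fun s => B i s ω + U i s t ω) '' Set.Icc 0 t) ≤ B (i + 1) t ω) (t T : ℕ) :
    {ω | ∀ s : ℕ, A t ω ≤ B N (t + s) ω → T < s} ⊆ ⋃ s ∈ timeChains N t (t + T),
      {ω | 0 ≤ ∑ j, chainTerms (fun s t ω => θ * (A t ω - A s ω))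
        (fun i s t ω => -θ * U i s t ω) t s j ω} := by
  intro ω hω
  have hlt : B N (t + T) ω < B 0 t ω := by
    rw [hB0]
    exact not_le.mp fun h => (hω T h).false
  have hserved (i : Fin N) :
      HasDynamicService (fun s t => U i s t ω) (fun t => B i t ω) (fun t => B (i + 1) t ω) :=
    hasDynamicService_of_sInf_le fun t => by rw [← Set.Icc_bot]; exact hServer i t ω
  obtain ⟨s, hs, hsum⟩ := exists_mem_timeChains_of_lt (B := fun k t => B k t ω)
    (fun i s t hst => hUnonneg i s t hst ω) (by simpa [hB0] using hAmono ω) hserved hlt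
  refine Set.mem_biUnion hs ?_
  have hfactor : ∑ j, chainTerms (fun s t ω => θ * (A t ω - A s ω))
        (fun i s t ω => -θ * U i s t ω) t s j ω
      = θ * (A t ω - (A (s 0) ω + ∑ i, U i (s i.castSucc) (s i.succ) ω)) := by
    simp only [chainTerms, Fintype.sum_option, Option.elim, ← Finset.mul_sum]
    ring
  rw [Set.mem_ofPred_eq, hfactor]
  simp only [Fin.val_zero, hB0] at hsum
  exact mul_nonneg hθ (sub_nonneg.mpr hsum.le)

lemma iIndepFun_chainTerms [MeasurableSpace Ω] {P : Measure Ω}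
    (hIndep : iIndep (fun j : Option (Fin N) =>
      Option.elim j (⨆ t, MeasurableSpace.comap (A t) inferInstance)
        (fun i => ⨆ p : ℕ × ℕ, MeasurableSpace.comap (U i p.1 p.2) inferInstance)) P)
    (θ : ℝ) (t : ℕ) (s : Fin (N + 1) → ℕ) :
    iIndepFun (chainTerms (fun s t ω => θ * (A t ω - A s ω))
      (fun i s t ω => -θ * U i s t ω) t s) P := by
  refine iIndepFun_of_iIndep_of_measurable hIndep
    (measurable_chainTerms (fun s t => ?_) (fun i s t => ?_) t s)
  · have hA (r : ℕ) : Measurable[⨆ t, MeasurableSpace.comap (A t) inferInstance] (A r) :=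
      (comap_measurable (A r)).mono (le_iSup_of_le r le_rfl) le_rfl
    exact ((hA t).sub (hA s)).const_mul θ
  · have hU : Measurable[⨆ p : ℕ × ℕ, MeasurableSpace.comap (U i p.1 p.2) inferInstance]
        (U i s t) :=
      (comap_measurable (U i s t)).mono (le_iSup_of_le (s, t) le_rfl) le_rfl
    exact hU.const_mul (-θ)

theorem end_to_end_delay_N_servers_general [MeasurableSpace Ω] (P : Measure Ω) (hθ : 0 < θ)
    {ρA σA : ℝ} {ρ σ : Fin N → ℝ}
    (hAmeas : ∀ t, Measurable (A t)) (hAmono : ∀ ω, Monotone fun t => A t ω)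
    (hUmeas : ∀ i s t, Measurable (U i s t))
    (hUnonneg : ∀ i s t, s ≤ t → ∀ ω, 0 ≤ U i s t ω)
    (hAbound : MGFBounded P (fun s t ω => θ * (A t ω - A s ω)) (θ * ρA) (θ * σA))
    (hUbound : ∀ i, MGFBounded P (fun s t ω => -θ * U i s t ω) (θ * ρ i) (θ * σ i))
    (hIndep : iIndep (fun j : Option (Fin N) =>
      Option.elim j (⨆ t, MeasurableSpace.comap (A t) inferInstance)
        (fun i => ⨆ p : ℕ × ℕ, MeasurableSpace.comap (U i p.1 p.2) inferInstance)) P)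
    (hB0 : ∀ t ω, B 0 t ω = A t ω)
    (hServer : ∀ i : Fin N, ∀ t ω,
      sInf ((fun s => B i s ω + U i s t ω) '' Set.Icc 0 t) ≤ B (i + 1) t ω)
    (hstab : ∀ i, ρA < -ρ i) (t T : ℕ) :
    P {ω | ∀ s : ℕ, A t ω ≤ B N (t + s) ω → T < s}
      ≤ ENNReal.ofReal (Real.exp (-(θ * ρA) * (T : ℝ))
          * Real.exp (θ * σA + ∑ i, θ * σ i)
          / ∏ i, (1 - Real.exp (θ * (ρ i + ρA)))) := by
  have hq (i : Fin N) : Real.exp (θ * (ρ i + ρA)) < 1 :=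
    Real.exp_lt_one_iff.mpr (mul_neg_of_pos_of_neg hθ (by linarith [hstab i]))
  have hchains := measure_biUnion_timeChains_le (fun s t => ((hAmeas t).sub (hAmeas s)).const_mul θ)
    (fun i s t => (hUmeas i s t).const_mul (-θ)) hAbound hUbound
    (t := t) (T := T) fun s _ => iIndepFun_chainTerms hIndep θ t s
  simp only [← mul_add, ofReal_mul_prod_inv_one_sub _ (fun _ => (Real.exp_pos _).le) hq] at hchains
  exact (measure_mono (setOf_lt_delay_subset hθ.le hAmono hUnonneg hB0 hServer t T)).trans hchains

end Delay

/-- End-to-end delay bound for a tandem of `N` dynamic servers.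
`B 0 = A` and `B (i+1)` is the output of a dynamic `U i`-server with input `B i`.
The end-to-end virtual delay `d(t) = min { s ≥ 0 | A(t) ≤ B_N(t+s) }` exceeds `T` exactly on
the event `{ω | every s with A(t) ≤ B_N(t+s) satisfies s > T}` (with `min ∅ = ∞`). -/
theorem end_to_end_delay_N_servers
    {Ω : Type*} [MeasurableSpace Ω] (P : Measure Ω) [IsProbabilityMeasure P]
    (θ : ℝ) (hθ : 0 < θ)
    (N : ℕ) (hN : 1 ≤ N)
    (A : ℕ → Ω → ℝ) (U : Fin N → ℕ → ℕ → Ω → ℝ) (B : ℕ → ℕ → Ω → ℝ)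
    (ρA σA : ℝ) (ρ σ : Fin N → ℝ)
    -- A is a flow
    (hAmeas : ∀ t, Measurable (A t))
    (hAmono : ∀ ω, Monotone fun t => A t ω)
    (hAzero : ∀ ω, A 0 ω = 0)
    -- each U i is a service process
    (hUmeas : ∀ i s t, Measurable (U i s t))
    (hUnonneg : ∀ i s t, s ≤ t → ∀ ω, 0 ≤ U i s t ω)
    -- MGF bounds
    (hAbound : ∀ s t, s ≤ t →
      ∫⁻ ω, ENNReal.ofReal (Real.exp (θ * (A t ω - A s ω))) ∂P
        ≤ ENNReal.ofReal (Real.exp (θ * ρA * ((t : ℝ) - (s : ℝ)) + θ * σA)))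
    (hUbound : ∀ i, ∀ s t, s ≤ t →
      ∫⁻ ω, ENNReal.ofReal (Real.exp (-θ * U i s t ω)) ∂P
        ≤ ENNReal.ofReal (Real.exp (θ * ρ i * ((t : ℝ) - (s : ℝ)) + θ * σ i)))
    -- A, U₁, …, U_N are mutually stochastically independent
    (hIndep : iIndep (fun j : Option (Fin N) =>
      Option.elim j (⨆ t, MeasurableSpace.comap (A t) inferInstance)
        (fun i => ⨆ p : ℕ × ℕ, MeasurableSpace.comap (U i p.1 p.2) inferInstance)) P)
    -- B 0 = A, and B (i+1) is the output of a dynamic (U i)-server with input B i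
    (hB0 : ∀ t ω, B 0 t ω = A t ω)
    (hBmeas : ∀ i t, Measurable (B i t))
    (hBmono : ∀ i ω, Monotone fun t => B i t ω)
    (hBzero : ∀ i ω, B i 0 ω = 0)
    (hServer : ∀ i : Fin N, ∀ t ω,
      sInf ((fun s => B i s ω + U i s t ω) '' Set.Icc 0 t) ≤ B (i + 1) t ω)
    (hBle : ∀ i : Fin N, ∀ t ω, B (i + 1) t ω ≤ B i t ω)
    -- stability condition: ρ_A(θ) < min_{1 ≤ i ≤ N} (−ρ_i(θ))
    (hstab : ∀ i : Fin N, ρA < -ρ i)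
    (t : ℕ) (T : ℕ) :
    P {ω | ∀ s : ℕ, A t ω ≤ B N (t + s) ω → T < s}
      ≤ ENNReal.ofReal (Real.exp (-(θ * ρA) * (T : ℝ))
          * Real.exp (θ * σA + ∑ i : Fin N, θ * σ i)
          / ∏ i : Fin N, (1 - Real.exp (θ * (ρ i + ρA)))) :=
  end_to_end_delay_N_servers_general P hθ hAmeas hAmono hUmeas hUnonneg hAbound hUbound hIndep hB0
    hServer hstab t T
end
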